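/- Given ε ∈ (0,1), δ ∈ (0,1), and an integer n_F ≥ 1, if the integer N satisfies N ≥ (7.47/ε) · ln(n_F/δ) and r = ⌊εN/2⌋, then B(r−1; N, ε) ≤ δ/n_F; in particular, taking N = ⌈(7.47/ε) · ln(n_F/δ)⌉ suffices. -/

import Mathlib

/-!
The proof is the Chernoff bound with tilting factor `1/2`. Only indices `i ≤ ε N / 2` contribute
to the sum, and for these `1 ≤ 2 ^ (ε N / 2) * (1/2) ^ i`. Inserting this factor and summing over
all `i` with the binomial theorem gives
`B ≤ 2 ^ (ε N / 2) * (1 - ε / 2) ^ N ≤ exp (-(1 - log 2) / 2 * ε N)`.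
Since `(1 - log 2) / 2 ≈ 0.153` exceeds `1 / 7.47 ≈ 0.134`, the hypothesis on `N` makes the right
side at most `exp (-log (nF / δ)) = δ / nF`. Rounding up the threshold is one admissible `N`.
-/

/-- Binomial cumulative distribution function `B(k; N, ε)`,
with the convention that it is `0` for `k < 0` (in particular `B(-1; N, ε) = 0`). -/
noncomputable def binomCdf (k : ℤ) (N : ℕ) (ε : ℝ) : ℝ :=
  ∑ i ∈ Finset.range (N + 1),
    if (i : ℤ) ≤ k then (N.choose i : ℝ) * ε ^ i * (1 - ε) ^ (N - i) else 0

/-- Chernoff bound for the lower tail at half the mean; the optimal tilting factor for small `ε`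
is `1/2`, the ratio of the threshold to the mean. -/
lemma binomCdf_half_mean_le (ε : ℝ) (hε : ε ∈ Set.Ioo (0 : ℝ) 1) (N : ℕ) (k : ℤ)
    (hk : (k : ℝ) ≤ ε * N / 2) :
    binomCdf k N ε ≤ Real.exp (-((1 - Real.log 2) / 2 * (ε * N))) := by
  obtain ⟨h0, h1⟩ := hε
  have hterm : ∀ i ∈ Finset.range (N + 1),
      (if (i : ℤ) ≤ k then (N.choose i : ℝ) * ε ^ i * (1 - ε) ^ (N - i) else 0) ≤
        Real.exp (ε * N / 2 * Real.log 2) *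
          ((ε / 2) ^ i * (1 - ε) ^ (N - i) * (N.choose i : ℝ)) := by
    intro i _
    have h1' : 0 ≤ 1 - ε := by linarith
    split_ifs with hi
    · have hi' : (i : ℝ) ≤ ε * N / 2 := le_trans (by exact_mod_cast hi) hk
      have hpow : (2 : ℝ) ^ i ≤ Real.exp (ε * N / 2 * Real.log 2) := by
        rw [← Real.exp_log (show (0 : ℝ) < 2 by norm_num), ← Real.exp_nat_mul, Real.exp_log
          (show (0 : ℝ) < 2 by norm_num)]
        have := Real.log_pos (show (1 : ℝ) < 2 by norm_num)
        gcongr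
      calc (N.choose i : ℝ) * ε ^ i * (1 - ε) ^ (N - i)
          = 2 ^ i * ((ε / 2) ^ i * (1 - ε) ^ (N - i) * (N.choose i : ℝ)) := by
            rw [div_pow]; field_simp
        _ ≤ _ := by gcongr
    · positivity
  calc binomCdf k N ε
      ≤ Real.exp (ε * N / 2 * Real.log 2) * (ε / 2 + (1 - ε)) ^ N := by
        rw [add_pow, Finset.mul_sum]
        exact Finset.sum_le_sum hterm
    _ ≤ Real.exp (ε * N / 2 * Real.log 2) * Real.exp (-(ε / 2)) ^ N := by
        have := Real.add_one_le_exp (-(ε / 2))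
        have h2 : 0 ≤ ε / 2 + (1 - ε) := by linarith
        gcongr
        linarith
    _ = _ := by
        rw [← Real.exp_nat_mul, ← Real.exp_add]
        ring_nf

theorem stmt10 (ε δ : ℝ) (hε : ε ∈ Set.Ioo (0 : ℝ) 1) (hδ : δ ∈ Set.Ioo (0 : ℝ) 1)
    (nF : ℕ) (hnF : 1 ≤ nF) :
    (∀ N : ℕ, 7.47 / ε * Real.log ((nF : ℝ) / δ) ≤ (N : ℝ) →
      binomCdf (⌊ε * (N : ℝ) / 2⌋ - 1) N ε ≤ δ / (nF : ℝ)) ∧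
    binomCdf
        (⌊ε * ((⌈7.47 / ε * Real.log ((nF : ℝ) / δ)⌉₊ : ℕ) : ℝ) / 2⌋ - 1)
        ⌈7.47 / ε * Real.log ((nF : ℝ) / δ)⌉₊ ε ≤ δ / (nF : ℝ) := by
  have main : ∀ N : ℕ, 7.47 / ε * Real.log ((nF : ℝ) / δ) ≤ (N : ℝ) →
      binomCdf (⌊ε * (N : ℝ) / 2⌋ - 1) N ε ≤ δ / (nF : ℝ) := by
    intro N hN
    have hn : (0 : ℝ) < nF := by exact_mod_cast hnF
    have hd := hδ.1
    have he := hε.1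
    refine (binomCdf_half_mean_le ε hε N _ ?_).trans ?_
    · have := Int.floor_le (ε * (N : ℝ) / 2)
      push_cast
      linarith
    · have hL : 7.47 * Real.log ((nF : ℝ) / δ) ≤ ε * N := by
        rw [div_mul_eq_mul_div, div_le_iff₀ he] at hN
        linarith
      have hexp : δ / nF = Real.exp (-Real.log ((nF : ℝ) / δ)) := by
        rw [Real.exp_neg, Real.exp_log (by positivity), inv_div]
      rw [hexp, Real.exp_le_exp, neg_le_neg_iff]
      have hlog := Real.log_two_lt_d9
      have hx : 0 ≤ ε * N := by positivity
      have hc : 1 / 7.47 * (ε * N) ≤ (1 - Real.log 2) / 2 * (ε * N) := by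
        apply mul_le_mul_of_nonneg_right _ hx
        norm_num at hlog ⊢
        linarith
      norm_num at hL hc ⊢
      linarith
  exact ⟨main, main _ (Nat.le_ceil _)⟩
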